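/- Let X be an infinite separable locally compact metric space, let f : X → X be a continuous weakly mixing map, let β denote the diameter of X (β = ∞ if X is unbounded), and let x₁, x₂, x₃, … be countably infinitely many points of X each of whose orbits under f has compact closure. Then there exist countably infinitely many pairwise disjoint Cantor sets S⁽¹⁾, S⁽²⁾, S⁽³⁾, … of totally transitive points of f whose union S = ⋃_{j≥1} S⁽ʲ⁾ is dense in X and is a β-scrambled set of fⁿ for every n ≥ 1, and such that for every point x ∈ {x₁, x₂, x₃, …} and every point c ∈ ⋃_{i≥0} fⁱ(S), liminf_{n→∞} ρ(fⁿ(x), fⁿ(c)) = 0 and limsup_{n→∞} ρ(fⁿ(x), fⁿ(c)) ≥ β/2, i.e., {x, c} is a (β/2)-scrambled set of f. -/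

import Mathlib

open Filter ENNReal

/-- `f` is (topologically) weakly mixing. -/
def WeaklyMixing {X : Type*} [TopologicalSpace X] (f : X → X) : Prop :=
  ∀ U₁ U₂ V₁ V₂ : Set X, IsOpen U₁ → IsOpen U₂ → IsOpen V₁ → IsOpen V₂ →
    U₁.Nonempty → U₂.Nonempty → V₁.Nonempty → V₂.Nonempty →
    ∃ n : ℕ, 1 ≤ n ∧ (f^[n] '' U₁ ∩ V₁).Nonempty ∧ (f^[n] '' U₂ ∩ V₂).Nonempty

/-- A Cantor set: a nonempty compact, perfect, totally disconnected subset. -/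
def IsCantorSet {X : Type*} [TopologicalSpace X] (C : Set X) : Prop :=
  C.Nonempty ∧ IsCompact C ∧ Perfect C ∧ IsTotallyDisconnected C

/-- `x` is a totally transitive point of `g`. -/
def TotallyTransitivePoint {Y : Type*} [TopologicalSpace Y] (g : Y → Y) (x : Y) : Prop :=
  ∀ k : ℕ, 1 ≤ k → Dense (Set.range fun m : ℕ => g^[k * m] x)

/-!
By Furstenberg's intersection lemma, weak mixing makes the hitting-time sets of finitely many pairs
of nonempty open sets share arbitrarily long intervals, hence arbitrarily large multiples of any
given `k`. A Baire category argument then shows that a residual set of points `a` is totally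
transitive and that, on a residual set of pairs, the trajectories under every iterate of `f`
alternately approach each other and separate by nearly `β`.

A totally bounded trajectory `y` is compared with `f^[n] a` through the same property: at a common
hitting time the orbit of `a` can be steered into any of finitely many fixed open sets. Small balls
covering `y` bring it close to `y n`. Two open sets nearly `β` apart take it nearly `β / 2` away,
since `y n` is far from one of them. Both conditions hold for residually many `a`.

Mycielski's theorem turns these residual sets into Cantor sets. Its proof is again a category
argument, in the space of sequences of continuous maps from the Cantor space `ℕ → Bool` to `X`: for
a generic sequence the ranges are disjoint Cantor sets satisfying the residual conditions, and their
union is dense.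
-/

open Set Topology Function

section PolishAndPerfect

theorem isOpenEmbedding_of_isDenseEmbedding {X Y : Type*} [TopologicalSpace X]
    [WeaklyLocallyCompactSpace X] [TopologicalSpace Y] [T2Space Y] {e : X → Y}
    (he : IsDenseEmbedding e) : IsOpenEmbedding e := by
  refine ⟨he.isEmbedding, isOpen_iff_mem_nhds.2 ?_⟩
  rintro _ ⟨x, rfl⟩
  obtain ⟨K, hK, hxK⟩ := exists_compact_mem_nhds x
  have hclosure : closure (e '' K) ∈ 𝓝 (e x) := he.isDenseInducing.closure_image_mem_nhds hxK
  rw [(hK.image he.continuous).isClosed.closure_eq] at hclosure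
  exact mem_of_superset hclosure (image_subset_range e K)

theorem polishSpace_of_weaklyLocallyCompactSpace (X : Type*) [MetricSpace X]
    [TopologicalSpace.SeparableSpace X] [WeaklyLocallyCompactSpace X] : PolishSpace X := by
  have hemb : IsOpenEmbedding ((↑) : X → UniformSpace.Completion X) :=
    isOpenEmbedding_of_isDenseEmbedding UniformSpace.Completion.isDenseEmbedding_coe
  have := hemb.isOpen_range.polishSpace
  exact hemb.isEmbedding.toHomeomorph.isClosedEmbedding.polishSpace

theorem tendsto_update_cofinite {ι : Type*} [DecidableEq ι] {X : ι → Type*}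
    [∀ i, TopologicalSpace (X i)] (u y : ∀ i, X i) :
    Tendsto (fun i => update u i (y i)) cofinite (𝓝 u) := by
  refine tendsto_pi_nhds.2 fun j => tendsto_const_nhds.congr' ?_
  filter_upwards [eventually_cofinite_ne j] with i hij
  rw [update_of_ne hij.symm]

theorem perfectSpace_pi {ι : Type*} [Infinite ι] {X : ι → Type*} [∀ i, TopologicalSpace (X i)]
    [∀ i, Nontrivial (X i)] : PerfectSpace (∀ i, X i) := by
  classical
  refine perfectSpace_iff_forall_not_isolated.2 fun u => ?_
  choose y hy using fun i => exists_ne (u i)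
  refine (tendsto_nhdsWithin_of_tendsto_nhds_of_eventually_within _
    (tendsto_update_cofinite u y) (.of_forall fun i => ?_)).neBot
  exact fun h => hy i (by simpa using congrFun h i)

theorem isCantorSet_range {K X : Type*} [TopologicalSpace K] [CompactSpace K] [PerfectSpace K]
    [TotallyDisconnectedSpace K] [Nonempty K] [TopologicalSpace X] [T2Space X] {φ : K → X}
    (hφ : Continuous φ) (hinj : Injective φ) : IsCantorSet (range φ) := by
  have hcompact : IsCompact (range φ) := isCompact_range hφ
  refine ⟨range_nonempty φ, hcompact, ⟨hcompact.isClosed, ?_⟩,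
    (hφ.isClosedEmbedding hinj).isEmbedding.isTotallyDisconnected_range.2 inferInstance⟩
  rintro _ ⟨s, rfl⟩
  simpa using (PerfectSpace.univ_preperfect s (mem_univ s)).map hφ.continuousAt hinj

end PolishAndPerfect

section GenericSequences

theorem eventually_residual_denseRange {ι Y : Type*} [Infinite ι] [TopologicalSpace Y]
    [SecondCountableTopology Y] : ∀ᶠ u : ι → Y in residual (ι → Y), DenseRange u := by
  classical
  have hmeets : ∀ᶠ u : ι → Y in residual (ι → Y),
      ∀ V ∈ TopologicalSpace.countableBasis Y, ∃ i, u i ∈ V := by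
    refine (eventually_countable_ball (TopologicalSpace.countable_countableBasis Y)).2
      fun V hV => residual_of_dense_open ?_ fun u => ?_
    · simp only [ofPred_exists]
      exact isOpen_iUnion fun i =>
        (TopologicalSpace.isOpen_of_mem_countableBasis hV).preimage (continuous_apply i)
    · obtain ⟨v, hv⟩ := TopologicalSpace.nonempty_of_mem_countableBasis hV
      exact mem_closure_of_tendsto (tendsto_update_cofinite u fun _ => v)
        (.of_forall fun i => ⟨i, by simpa using hv⟩)
  filter_upwards [hmeets] with u hu
  refine (TopologicalSpace.isBasis_countableBasis Y).dense_iff.2 fun V hV _ => ?_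
  obtain ⟨i, hi⟩ := hu V hV
  exact ⟨u i, hi, mem_range_self i⟩

theorem isOpenMap_eval_prodMk {ι : Type*} {X : ι → Type*} [∀ i, TopologicalSpace (X i)]
    {p q : ι} (hpq : p ≠ q) : IsOpenMap fun z : ∀ i, X i => (z p, z q) := by
  classical
  refine IsOpenMap.of_sections fun z =>
    ⟨fun a => update (update z p a.1) q a.2, Continuous.continuousAt (by fun_prop), by simp, ?_⟩
  exact fun a => Prod.ext (by simp [hpq]) (by simp)

theorem eventually_residual_pairwise {ι X : Type*} [Countable ι] [TopologicalSpace X]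
    {D : Set (X × X)} (hD : D ∈ residual (X × X)) :
    ∀ᶠ z : ι → X in residual (ι → X), Pairwise fun p q => (z p, z q) ∈ D := by
  simp only [Pairwise, eventually_countable_forall]
  exact fun p q hpq =>
    tendsto_residual_of_isOpenMap (by fun_prop) (isOpenMap_eval_prodMk hpq) hD

theorem eventually_residual_fst_ne_snd {X : Type*} [TopologicalSpace X] [T2Space X]
    [PerfectSpace X] : ∀ᶠ p : X × X in residual (X × X), p.1 ≠ p.2 := by
  refine residual_of_dense_open (isOpen_ne_fun continuous_fst continuous_snd) ?_
  rintro ⟨a, b⟩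
  have htendsto : Tendsto (Prod.mk a) (𝓝[≠] b) (𝓝 (a, b)) :=
    (Continuous.prodMk_right a).continuousAt.mono_left nhdsWithin_le_nhds
  obtain rfl | hab := eq_or_ne a b
  · exact mem_closure_of_tendsto htendsto (eventually_nhdsWithin_of_forall fun c hc => Ne.symm hc)
  · exact subset_closure hab

end GenericSequences

section CantorFamilies

variable {ι X : Type*} [TopologicalSpace X]

/-- The first `N` terms of a point of the Cantor space `ℕ → Bool`. -/
def initialSegment (N : ℕ) (s : ℕ → Bool) : Fin N → Bool := fun k => s k

theorem continuous_initialSegment (N : ℕ) : Continuous (initialSegment N) := by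
  unfold initialSegment
  fun_prop

/-- The point of the Cantor space with the same first `N` terms as `s` and `false` afterwards. -/
def truncate (N : ℕ) : C(ℕ → Bool, ℕ → Bool) where
  toFun s k := if k < N then s k else false
  continuous_toFun := continuous_pi fun k => by split_ifs <;> fun_prop

theorem tendsto_truncate : Tendsto truncate atTop (𝓝 (ContinuousMap.id (ℕ → Bool))) := by
  rw [ContinuousMap.tendsto_iff_tendstoUniformly, tendstoUniformly_iff_tendsto, Pi.uniformity,
    tendsto_iInf]
  intro k
  rw [tendsto_comap_iff]
  have hagree : ∀ᶠ q : ℕ × (ℕ → Bool) in atTop ×ˢ ⊤, truncate q.1 q.2 k = q.2 k := by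
    filter_upwards [(eventually_gt_atTop k).prod_inl ⊤] with q hq
    exact if_pos hq
  intro V hV
  rw [mem_map]
  filter_upwards [hagree] with q hq
  simpa [hq] using refl_mem_uniformity hV

/-- The family of maps on the Cantor space depending only on the first `N` terms, with prescribed
values `z`. Such families are parametrised by a product of copies of `X` and are dense among all
families of continuous maps. -/
def stepFamily (N : ℕ) (z : ι × (Fin N → Bool) → X) (j : ι) : C(ℕ → Bool, X) where
  toFun s := z (j, initialSegment N s)
  continuous_toFun :=
    (continuous_of_discreteTopology (f := fun u => z (j, u))).comp (continuous_initialSegment N)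

theorem continuous_stepFamily (N : ℕ) :
    Continuous (stepFamily N : (ι × (Fin N → Bool) → X) → ι → C(ℕ → Bool, X)) := by
  refine continuous_pi fun j => ContinuousMap.continuous_of_continuous_uncurry _ ?_
  have hdiscrete : Continuous fun q : (ι × (Fin N → Bool) → X) × (Fin N → Bool) => q.1 (j, q.2) :=
    continuous_prod_of_discrete_right.2 fun u => continuous_apply (j, u)
  exact hdiscrete.comp (continuous_id.prodMap (continuous_initialSegment N))

theorem exists_stepFamily_eq_comp_truncate (φ : ι → C(ℕ → Bool, X)) (N : ℕ) :
    ∃ z, stepFamily N z = fun j => (φ j).comp (truncate N) :=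
  ⟨fun p => φ p.1 fun k => if h : k < N then p.2 ⟨k, h⟩ else false, rfl⟩

theorem dense_of_dense_preimage_stepFamily {P : Set (ι → C(ℕ → Bool, X))} {m : ℕ}
    (hP : ∀ N, m ≤ N → Dense (stepFamily N ⁻¹' P)) : Dense P := by
  intro φ
  have htendsto : Tendsto (fun N j => (φ j).comp (truncate N)) atTop (𝓝 φ) :=
    tendsto_pi_nhds.2 fun j =>
      ((φ j).continuous_postcomp.tendsto (ContinuousMap.id _)).comp tendsto_truncate
  refine isClosed_closure.mem_of_tendsto htendsto ?_
  filter_upwards [eventually_ge_atTop m] with N hN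
  obtain ⟨z, hz⟩ := exists_stepFamily_eq_comp_truncate φ N
  exact hz ▸ (continuous_stepFamily N).closure_preimage_subset P (hP N hN z)

theorem exists_initialSegment_ne {i j : ι} {s t : ℕ → Bool} (h : (i, s) ≠ (j, t)) :
    ∃ m, (i, initialSegment m s) ≠ (j, initialSegment m t) := by
  by_contra! hagree
  refine h (Prod.ext (Prod.ext_iff.1 (hagree 0)).1 (funext fun k => ?_))
  exact congrFun (Prod.ext_iff.1 (hagree (k + 1))).2 ⟨k, k.lt_succ_self⟩

theorem initialSegment_ne_of_le {i j : ι} {s t : ℕ → Bool} {m N : ℕ} (hmN : m ≤ N)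
    (h : (i, initialSegment m s) ≠ (j, initialSegment m t)) :
    (i, initialSegment N s) ≠ (j, initialSegment N t) := by
  refine fun hagree => h (Prod.ext (Prod.ext_iff.1 hagree).1 (funext fun k => ?_))
  exact congrFun (Prod.ext_iff.1 hagree).2 (k.castLE hmN)

/-- The families whose members `i` and `j` send any two points told apart by their index or by
their first `m` terms to a pair in `D`. Bounding the number of terms by `m` makes the set of such
pairs of points compact. -/
def pairingFamilies (D : Set (X × X)) (m : ℕ) (i j : ι) : Set (ι → C(ℕ → Bool, X)) :=
  {φ | ∀ s t, (i, initialSegment m s) ≠ (j, initialSegment m t) → (φ i s, φ j t) ∈ D}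

theorem isOpen_pairingFamilies {D : Set (X × X)} (hD : IsOpen D) (m : ℕ) (i j : ι) :
    IsOpen (pairingFamilies D m i j) := by
  let separated : Set ((ℕ → Bool) × (ℕ → Bool)) :=
    {p | (i, initialSegment m p.1) ≠ (j, initialSegment m p.2)}
  have hcompact : IsCompact separated := by
    have hcont : Continuous fun p : (ℕ → Bool) × (ℕ → Bool) =>
        (initialSegment m p.1, initialSegment m p.2) :=
      (continuous_initialSegment m).prodMap (continuous_initialSegment m)
    exact ((isClosed_discrete {q : (Fin m → Bool) × (Fin m → Bool) | (i, q.1) ≠ (j, q.2)}).preimage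
      hcont).isCompact
  have hprodMap : Continuous fun φ : ι → C(ℕ → Bool, X) => (φ i).prodMap (φ j) := by
    refine ContinuousMap.continuous_of_continuous_uncurry _ ?_
    change Continuous fun q : (ι → C(ℕ → Bool, X)) × ((ℕ → Bool) × (ℕ → Bool)) =>
      (q.1 i q.2.1, q.1 j q.2.2)
    fun_prop
  convert (ContinuousMap.isOpen_setOfPred_mapsTo hcompact hD).preimage hprodMap using 1
  exact Set.ext fun φ => ⟨fun h p hp => h p.1 p.2 hp, fun h s t hst => h (x := (s, t)) hst⟩

theorem dense_pairingFamilies [Countable ι] [TopologicalSpace.IsCompletelyMetrizableSpace X]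
    {D : Set (X × X)} (hD : D ∈ residual (X × X)) (m : ℕ) (i j : ι) :
    Dense (pairingFamilies D m i j) := by
  refine dense_of_dense_preimage_stepFamily (m := m) fun N hN => ?_
  refine (dense_of_mem_residual (eventually_residual_pairwise hD)).mono fun z hz s t hst => ?_
  exact hz (initialSegment_ne_of_le hN hst)

theorem eventually_residual_forall_prodMk_mem [Countable ι]
    [TopologicalSpace.IsCompletelyMetrizableSpace X] {R : Set (X × X)}
    (hR : R ∈ residual (X × X)) :
    ∀ᶠ φ : ι → C(ℕ → Bool, X) in residual (ι → C(ℕ → Bool, X)),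
      ∀ i j s t, (i, s) ≠ (j, t) → (φ i s, φ j t) ∈ R := by
  obtain ⟨𝒟, hopen, hdense, hcountable, hsub⟩ := mem_residual_iff.1 hR
  have hpairing : ∀ᶠ φ : ι → C(ℕ → Bool, X) in residual (ι → C(ℕ → Bool, X)),
      ∀ D ∈ 𝒟, ∀ m i j, φ ∈ pairingFamilies D m i j := by
    rw [eventually_countable_ball hcountable]
    simp only [eventually_countable_forall]
    exact fun D hD m i j => residual_of_dense_open (isOpen_pairingFamilies (hopen D hD) m i j)
      (dense_pairingFamilies (residual_of_dense_open (hopen D hD) (hdense D hD)) m i j)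
  filter_upwards [hpairing] with φ hφ i j s t hst
  obtain ⟨m, hm⟩ := exists_initialSegment_ne hst
  exact hsub fun D hD => hφ D hD m i j s t hm

/-- Mycielski's theorem. -/
theorem exists_isCantorSet_dense_iUnion_of_mem_residual [PolishSpace X] [PerfectSpace X]
    [Nonempty X] {A : Set X} (hA : A ∈ residual X) {R : Set (X × X)} (hR : R ∈ residual (X × X)) :
    ∃ S : ℕ → Set X, Pairwise (Disjoint on S) ∧ (∀ j, IsCantorSet (S j)) ∧ Dense (⋃ j, S j) ∧
      ⋃ j, S j ⊆ A ∧ (⋃ j, S j).Pairwise fun a b => (a, b) ∈ R := by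
  let _ := TopologicalSpace.upgradeIsCompletelyMetrizable X
  have : Nonempty C(ℕ → Bool, X) := .map (ContinuousMap.const _) ‹_›
  have hfst : ∀ᶠ p : X × X in residual (X × X), p.1 ∈ A :=
    tendsto_residual_of_isOpenMap continuous_fst isOpenMap_fst hA
  have hgeneric : ∀ᶠ p : X × X in residual (X × X), p.1 ∈ A ∧ p.1 ≠ p.2 ∧ p ∈ R :=
    hfst.and (eventually_residual_fst_ne_snd.and hR)
  obtain ⟨φ, hpair, hdense⟩ := (dense_of_mem_residual ((eventually_residual_forall_prodMk_mem
    hgeneric).and (eventually_residual_denseRange (ι := ℕ) (Y := C(ℕ → Bool, X))))).nonempty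
  have := perfectSpace_pi (X := fun _ : ℕ => Bool)
  refine ⟨fun j => range (φ j), fun i j hij => disjoint_left.2 ?_,
    fun j => isCantorSet_range (φ j).continuous fun s t hst => ?_, ?_, ?_, ?_⟩
  · rintro _ ⟨s, rfl⟩ ⟨t, hts⟩
    exact (hpair i j s t (by simp [hij])).2.1 hts.symm
  · by_contra hne
    exact (hpair j j s t (by simp [hne])).2.1 hst
  · have heval : Surjective fun ψ : C(ℕ → Bool, X) => ψ fun _ => false :=
      fun a => ⟨ContinuousMap.const _ a, rfl⟩
    refine (heval.denseRange.comp hdense (by fun_prop)).mono ?_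
    exact range_subset_iff.2 fun j => mem_iUnion.2 ⟨j, mem_range_self _⟩
  · refine iUnion_subset fun j => ?_
    rintro _ ⟨s, rfl⟩
    exact (hpair j (j + 1) s s (by simp)).1
  · intro a ha b hb hab
    obtain ⟨⟨i, s, rfl⟩, j, t, rfl⟩ := mem_iUnion.1 ha, mem_iUnion.1 hb
    exact (hpair i j s t (by rintro ⟨⟩; exact hab rfl)).2.2

end CantorFamilies
section WeakMixing

variable {X : Type*}

/-- The times `n` at which some point of `U` visits `V`; this is the set usually denoted
`N(U, V)`. -/
def hittingTimes (f : X → X) (U V : Set X) : Set ℕ := {n | ∃ a ∈ U, f^[n] a ∈ V}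

namespace WeaklyMixing

variable [TopologicalSpace X] {f : X → X}

theorem exists_mem_hittingTimes (hwm : WeaklyMixing f) {U₁ U₂ V₁ V₂ : Set X} (hU₁ : IsOpen U₁)
    (hU₂ : IsOpen U₂) (hV₁ : IsOpen V₁) (hV₂ : IsOpen V₂) (hU₁ne : U₁.Nonempty)
    (hU₂ne : U₂.Nonempty) (hV₁ne : V₁.Nonempty) (hV₂ne : V₂.Nonempty) :
    ∃ n, 1 ≤ n ∧ n ∈ hittingTimes f U₁ V₁ ∧ n ∈ hittingTimes f U₂ V₂ := by
  obtain ⟨n, hn, ⟨_, ⟨a, ha, rfl⟩, haV⟩, ⟨_, ⟨b, hb, rfl⟩, hbV⟩⟩ :=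
    hwm U₁ U₂ V₁ V₂ hU₁ hU₂ hV₁ hV₂ hU₁ne hU₂ne hV₁ne hV₂ne
  exact ⟨n, hn, ⟨a, ha, haV⟩, ⟨b, hb, hbV⟩⟩

theorem perfectSpace [T2Space X] [Nontrivial X] (hwm : WeaklyMixing f) : PerfectSpace X := by
  refine perfectSpace_iff_forall_not_isolated.2 fun x => neBot_iff.2 fun hx => ?_
  have hopen : IsOpen {x} := isOpen_singleton_iff_punctured_nhds x |>.2 hx
  obtain ⟨p, q, hpq⟩ := exists_pair_ne X
  obtain ⟨P, Q, hP, hQ, hp, hq, hdisjoint⟩ := t2_separation hpq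
  obtain ⟨n, -, ⟨_, rfl, haP⟩, ⟨_, rfl, haQ⟩⟩ := hwm.exists_mem_hittingTimes hopen hopen hP hQ
    (singleton_nonempty x) (singleton_nonempty x) ⟨p, hp⟩ ⟨q, hq⟩
  exact disjoint_left.1 hdisjoint haP haQ

theorem denseRange (hwm : WeaklyMixing f) : DenseRange f := by
  refine dense_iff_inter_open.2 fun V hV hVne => ?_
  have huniv : (univ : Set X).Nonempty := hVne.mono (subset_univ V)
  obtain ⟨n, hn, ⟨a, -, ha⟩, -⟩ := hwm.exists_mem_hittingTimes isOpen_univ isOpen_univ hV hV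
    huniv huniv hVne hVne
  obtain ⟨n, rfl⟩ := Nat.exists_eq_add_of_le' hn
  exact ⟨f^[n + 1] a, ha, f^[n] a, (iterate_succ_apply' f n a).symm⟩

theorem denseRange_iterate (hwm : WeaklyMixing f) (hf : Continuous f) (n : ℕ) :
    DenseRange f^[n] := by
  induction n with
  | zero => exact denseRange_id
  | succ n ih => exact ih.comp hwm.denseRange (hf.iterate n)

variable {ι : Type*} {U V : ι → Set X}

theorem exists_hittingTimes_subset_iInter [Nonempty X] (hwm : WeaklyMixing f) (hf : Continuous f)
    (hU : ∀ i, IsOpen (U i)) (hV : ∀ i, IsOpen (V i)) (hUne : ∀ i, (U i).Nonempty)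
    (hVne : ∀ i, (V i).Nonempty) (s : Finset ι) :
    ∃ A B : Set X, IsOpen A ∧ IsOpen B ∧ A.Nonempty ∧ B.Nonempty ∧
      hittingTimes f A B ⊆ ⋂ i ∈ s, hittingTimes f (U i) (V i) := by
  classical
  induction s using Finset.induction_on with
  | empty => exact ⟨univ, univ, isOpen_univ, isOpen_univ, univ_nonempty, univ_nonempty, by simp⟩
  | insert i s _ ih =>
    obtain ⟨A, B, hA, hB, hAne, hBne, hsub⟩ := ih
    obtain ⟨m, -, ⟨a, haA, haU⟩, ⟨b, hbB, hbV⟩⟩ :=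
      hwm.exists_mem_hittingTimes hA hB (hU i) (hV i) hAne hBne (hUne i) (hVne i)
    refine ⟨A ∩ f^[m] ⁻¹' U i, B ∩ f^[m] ⁻¹' V i, hA.inter ((hU i).preimage (hf.iterate m)),
      hB.inter ((hV i).preimage (hf.iterate m)), ⟨a, haA, haU⟩, ⟨b, hbB, hbV⟩, ?_⟩
    rintro n ⟨z, ⟨hzA, hzU⟩, hzB, hzV⟩
    rw [Finset.set_biInter_insert]
    refine ⟨⟨f^[m] z, hzU, ?_⟩, hsub ⟨z, hzA, hzB⟩⟩
    rwa [← iterate_add_apply, add_comm, iterate_add_apply]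

theorem exists_forall_lt_add_mem_hittingTimes [Nonempty X] [Finite ι] (hwm : WeaklyMixing f)
    (hf : Continuous f) (hU : ∀ i, IsOpen (U i)) (hV : ∀ i, IsOpen (V i))
    (hUne : ∀ i, (U i).Nonempty) (hVne : ∀ i, (V i).Nonempty) (L : ℕ) :
    ∃ n, ∀ j < L, ∀ i, n + j ∈ hittingTimes f (U i) (V i) := by
  have := Fintype.ofFinite ι
  obtain ⟨A, B, hA, hB, hAne, hBne, hsub⟩ :=
    hwm.exists_hittingTimes_subset_iInter (U := fun p : ι × Fin L => U p.1)
      (V := fun p => f^[p.2] ⁻¹' V p.1) hf (fun p => hU p.1)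
      (fun p => (hV p.1).preimage (hf.iterate p.2)) (fun p => hUne p.1)
      (fun p => (hwm.denseRange_iterate hf p.2).exists_mem_open (hV p.1) (hVne p.1)) Finset.univ
  obtain ⟨n, -, hn, -⟩ := hwm.exists_mem_hittingTimes hA hA hB hB hAne hAne hBne hBne
  refine ⟨n, fun j hj i => ?_⟩
  obtain ⟨a, haU, haV⟩ := mem_iInter₂.1 (hsub hn) (i, ⟨j, hj⟩) (Finset.mem_univ _)
  exact ⟨a, haU, by rwa [add_comm, iterate_add_apply]⟩

theorem frequently_forall_mul_mem_hittingTimes [Nonempty X] [Finite ι] (hwm : WeaklyMixing f)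
    (hf : Continuous f) (hU : ∀ i, IsOpen (U i)) (hV : ∀ i, IsOpen (V i))
    (hUne : ∀ i, (U i).Nonempty) (hVne : ∀ i, (V i).Nonempty) {k : ℕ} (hk : 1 ≤ k) :
    ∃ᶠ n in atTop, ∀ i, k * n ∈ hittingTimes f (U i) (V i) := by
  refine frequently_atTop.2 fun N => ?_
  obtain ⟨n, hn⟩ :=
    hwm.exists_forall_lt_add_mem_hittingTimes hf hU hV hUne hVne (k * (N + 1) + 1)
  -- The window `[n, n + k * (N + 1)]` contains the multiple `k * (n / k + N + 1)`.
  have hmod : k * (n / k) + n % k = n := Nat.div_add_mod n k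
  have hlt : n % k < k := Nat.mod_lt n hk
  have hmul : k * (n / k + N + 1) = k * (n / k) + k * (N + 1) := by ring
  have hle : k ≤ k * (N + 1) := Nat.le_mul_of_pos_right k N.succ_pos
  refine ⟨n / k + N + 1, Nat.le_succ_of_le (Nat.le_add_left N _), fun i => ?_⟩
  have hmem := hn (k * (N + 1) - n % k) (by omega) i
  rwa [show n + (k * (N + 1) - n % k) = k * (n / k + N + 1) by omega] at hmem

end WeaklyMixing

end WeakMixing

section GenericOrbits

theorem eventually_residual_frequently_mem {Y Z : Type*} [TopologicalSpace Y]
    [TopologicalSpace Z] {F : ℕ → Y → Z} (hF : ∀ n, Continuous (F n)) {W : ℕ → Set Z}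
    (hW : ∀ n, IsOpen (W n))
    (hfreq : ∀ O : Set Y, IsOpen O → O.Nonempty → ∃ᶠ n in atTop, ∃ y ∈ O, F n y ∈ W n) :
    ∀ᶠ y in residual Y, ∃ᶠ n in atTop, F n y ∈ W n := by
  simp only [frequently_atTop, eventually_countable_forall]
  refine fun N => residual_of_dense_open ?_ (dense_iff_inter_open.2 fun O hO hOne => ?_)
  · have hunion : {y | ∃ n, N ≤ n ∧ F n y ∈ W n} = ⋃ n, ⋃ _ : N ≤ n, F n ⁻¹' W n := by
      ext; simp
    exact hunion ▸ isOpen_iUnion fun n => isOpen_iUnion fun _ => (hW n).preimage (hF n)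
  · obtain ⟨n, hn, y, hyO, hyW⟩ := frequently_atTop.1 (hfreq O hO hOne) N
    exact ⟨y, hyO, n, hn, hyW⟩

namespace WeaklyMixing

variable {X : Type*} [TopologicalSpace X] {f : X → X}

theorem eventually_residual_totallyTransitivePoint [SecondCountableTopology X]
    (hwm : WeaklyMixing f) (hf : Continuous f) :
    ∀ᶠ a in residual X, TotallyTransitivePoint f a := by
  have hvisit : ∀ᶠ a in residual X, ∀ k, 1 ≤ k → ∀ V ∈ TopologicalSpace.countableBasis X,
      ∃ᶠ m in atTop, f^[k * m] a ∈ V := by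
    simp only [eventually_countable_forall,
      eventually_countable_ball (TopologicalSpace.countable_countableBasis X)]
    intro k hk V hV
    have hVne := TopologicalSpace.nonempty_of_mem_countableBasis hV
    have hVopen := TopologicalSpace.isOpen_of_mem_countableBasis hV
    have : Nonempty X := hVne.to_type
    refine eventually_residual_frequently_mem (fun m => hf.iterate (k * m)) (fun _ => hVopen)
      fun O hO hOne => ?_
    exact (hwm.frequently_forall_mul_mem_hittingTimes hf (fun _ : Unit => hO) (fun _ => hVopen)
      (fun _ => hOne) (fun _ => hVne) hk).mono fun m hm => hm ()
  filter_upwards [hvisit] with a ha k hk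
  refine (TopologicalSpace.isBasis_countableBasis X).dense_iff.2 fun V hV _ => ?_
  obtain ⟨m, hm⟩ := (ha k hk V hV).exists
  exact ⟨f^[k * m] a, hm, m, rfl⟩

theorem eventually_residual_prod_frequently_mem (hwm : WeaklyMixing f) (hf : Continuous f)
    {W : Set (X × X)} (hW : IsOpen W) (hWne : W.Nonempty) {n : ℕ} (hn : 1 ≤ n) :
    ∀ᶠ p in residual (X × X), ∃ᶠ k in atTop, (f^[n * k] p.1, f^[n * k] p.2) ∈ W := by
  obtain ⟨⟨c, d⟩, hcd⟩ := hWne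
  obtain ⟨C, D, hC, hD, hc, hd, hCD⟩ := isOpen_prod_iff.1 hW c d hcd
  refine eventually_residual_frequently_mem
    (F := fun k (p : X × X) => (f^[n * k] p.1, f^[n * k] p.2))
    (fun k => (hf.iterate (n * k)).prodMap (hf.iterate (n * k))) (fun _ => hW) ?_
  rintro O hO ⟨⟨a, b⟩, hab⟩
  obtain ⟨A, B, hA, hB, ha, hb, hAB⟩ := isOpen_prod_iff.1 hO a b hab
  have : Nonempty X := ⟨a⟩
  refine (hwm.frequently_forall_mul_mem_hittingTimes (ι := Bool) (U := fun i => cond i A B)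
    (V := fun i => cond i C D) hf (Bool.forall_bool.2 ⟨hB, hA⟩) (Bool.forall_bool.2 ⟨hD, hC⟩)
    (Bool.forall_bool.2 ⟨⟨b, hb⟩, ⟨a, ha⟩⟩) (Bool.forall_bool.2 ⟨⟨d, hd⟩, ⟨c, hc⟩⟩) hn).mono ?_
  intro k hk
  obtain ⟨⟨a', haA, haC⟩, ⟨b', hbB, hbD⟩⟩ := hk true, hk false
  exact ⟨(a', b'), hAB ⟨haA, hbB⟩, hCD ⟨haC, hbD⟩⟩

theorem eventually_residual_frequently_iterate_mem (hwm : WeaklyMixing f) (hf : Continuous f)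
    {κ : Type*} [Finite κ] {Q : κ → Set X} (hQ : ∀ q, IsOpen (Q q)) (hQne : ∀ q, (Q q).Nonempty)
    {V : ℕ → Set X} (hV : ∀ n, IsOpen (V n)) (hQV : ∀ n, ∃ q, Q q ⊆ V n) (i : ℕ) :
    ∀ᶠ a in residual X, ∃ᶠ n in atTop, f^[n] (f^[i] a) ∈ V n := by
  refine eventually_residual_frequently_mem (fun n => (hf.iterate n).comp (hf.iterate i)) hV
    fun O hO hOne => frequently_atTop.2 fun N => ?_
  have : Nonempty X := hOne.to_type
  obtain ⟨m, hm, hit⟩ := frequently_atTop.1 (hwm.frequently_forall_mul_mem_hittingTimes hf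
    (fun _ : κ => hO) hQ (fun _ => hOne) hQne le_rfl) (N + i)
  obtain ⟨q, hq⟩ := hQV (m - i)
  obtain ⟨a, haO, haQ⟩ := hit q
  refine ⟨m - i, by omega, a, haO, hq ?_⟩
  rwa [comp_apply, ← iterate_add_apply, Nat.sub_add_cancel (by omega), ← one_mul m]

end WeaklyMixing

end GenericOrbits

section Scrambled

theorem eventually_le_limsup_of_frequently_lt {α ι β : Type*} {l : Filter α}
    [CountableInterFilter l] {F : Filter ι} [CompleteLinearOrder β] [TopologicalSpace β]
    [OrderTopology β] [DenselyOrdered β] [TopologicalSpace.SeparableSpace β]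
    {u : α → ι → β} {b : β}
    (h : ∀ r < b, ∀ᶠ a in l, ∃ᶠ i in F, r < u a i) : ∀ᶠ a in l, b ≤ F.limsup (u a) := by
  obtain ⟨T, hT, hTdense⟩ := TopologicalSpace.exists_countable_dense β
  have hfreq : ∀ᶠ a in l, ∀ r ∈ T, r < b → ∃ᶠ i in F, r < u a i := by
    simpa only [eventually_countable_ball hT, eventually_imp_distrib_left] using fun r _ => h r
  filter_upwards [hfreq] with a ha
  by_contra! hlt
  obtain ⟨r, hrT, hr, hrb⟩ := hTdense.exists_between hlt
  exact hr.not_ge (le_limsup_of_frequently_le' ((ha r hrT hrb).mono fun _ => le_of_lt))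

theorem eventually_liminf_le_of_frequently_lt {α ι β : Type*} {l : Filter α}
    [CountableInterFilter l] {F : Filter ι} [CompleteLinearOrder β] [TopologicalSpace β]
    [OrderTopology β] [DenselyOrdered β] [TopologicalSpace.SeparableSpace β]
    {u : α → ι → β} {b : β}
    (h : ∀ r > b, ∀ᶠ a in l, ∃ᶠ i in F, u a i < r) : ∀ᶠ a in l, F.liminf (u a) ≤ b :=
  have : TopologicalSpace.SeparableSpace βᵒᵈ := ‹TopologicalSpace.SeparableSpace β›
  eventually_le_limsup_of_frequently_lt (β := βᵒᵈ) h

variable {X : Type*} [PseudoEMetricSpace X]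

/-- The defining condition of an `η`-scrambled pair, for two sequences of points instead of two
points: `{a, b}` is `η`-scrambled for `g` when the trajectories `g^[n] a` and `g^[n] b` satisfy
it and `a ≠ b`. -/
def ScrambledPair (η : ℝ≥0∞) (u v : ℕ → X) : Prop :=
  atTop.liminf (fun n => edist (u n) (v n)) = 0 ∧ η ≤ atTop.limsup fun n => edist (u n) (v n)

theorem eventually_scrambledPair {α : Type*} {l : Filter α} [CountableInterFilter l] {η : ℝ≥0∞}
    {u v : α → ℕ → X}
    (hnear : ∀ r > 0, ∀ᶠ a in l, ∃ᶠ n in atTop, edist (u a n) (v a n) < r)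
    (hfar : ∀ r < η, ∀ᶠ a in l, ∃ᶠ n in atTop, r < edist (u a n) (v a n)) :
    ∀ᶠ a in l, ScrambledPair η (u a) (v a) :=
  ((eventually_liminf_le_of_frequently_lt hnear).mono fun _ => nonpos_iff_eq_zero.1).and
    (eventually_le_limsup_of_frequently_lt hfar)

theorem exists_lt_edist_of_lt_ediam {r : ℝ≥0∞} {s : Set X} (h : r < Metric.ediam s) :
    ∃ a ∈ s, ∃ b ∈ s, r < edist a b := by
  contrapose! h
  exact Metric.ediam_le h

namespace WeaklyMixing

variable {f : X → X}

theorem eventually_residual_prod_scrambledPair (hwm : WeaklyMixing f) (hf : Continuous f)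
    {n : ℕ} (hn : 1 ≤ n) :
    ∀ᶠ p in residual (X × X), ScrambledPair (Metric.ediam (univ : Set X))
      (fun k => f^[n * k] p.1) fun k => f^[n * k] p.2 := by
  obtain hX | ⟨⟨a⟩⟩ := isEmpty_or_nonempty X
  · exact .of_forall fun p => hX.elim p.1
  refine eventually_scrambledPair (fun r hr => ?_) fun r hr => ?_
  · exact hwm.eventually_residual_prod_frequently_mem hf (W := {p | edist p.1 p.2 < r})
      (isOpen_lt continuous_edist continuous_const) ⟨(a, a), by simpa using hr⟩ hn
  · obtain ⟨b, -, c, -, hbc⟩ := exists_lt_edist_of_lt_ediam hr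
    exact hwm.eventually_residual_prod_frequently_mem hf (W := {p | r < edist p.1 p.2})
      (isOpen_lt continuous_const continuous_edist) ⟨(b, c), hbc⟩ hn

theorem eventually_residual_frequently_edist_lt (hwm : WeaklyMixing f) (hf : Continuous f)
    {y : ℕ → X} (hy : TotallyBounded (range y)) (i : ℕ) {r : ℝ≥0∞} (hr : 0 < r) :
    ∀ᶠ a in residual X, ∃ᶠ n in atTop, edist (y n) (f^[n] (f^[i] a)) < r := by
  have hr2 : 0 < r / 2 := ENNReal.half_pos hr.ne'
  obtain ⟨t, ht, hcover⟩ := EMetric.totallyBounded_iff.1 hy (r / 2) hr2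
  have := ht.to_subtype
  refine hwm.eventually_residual_frequently_iterate_mem hf
    (Q := fun z : t => {w | edist w z < r / 2}) (V := fun n => {w | edist (y n) w < r})
    (fun z => isOpen_lt (by fun_prop) continuous_const) (fun z => ⟨z, by simpa using hr2⟩)
    (fun n => isOpen_lt (by fun_prop) continuous_const) (fun n => ?_) i
  obtain ⟨z, hz, hyz⟩ := mem_iUnion₂.1 (hcover (mem_range_self n))
  refine ⟨⟨z, hz⟩, fun w hw => ?_⟩
  calc edist (y n) w ≤ edist (y n) z + edist w z := edist_triangle_right _ _ _
    _ < r / 2 + r / 2 := ENNReal.add_lt_add hyz hw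
    _ = r := ENNReal.add_halves r

-- Of two open sets more than `2 * r` apart, each ball of radius `r` misses at least one.
theorem eventually_residual_frequently_lt_edist (hwm : WeaklyMixing f) (hf : Continuous f)
    (y : ℕ → X) (i : ℕ) {r : ℝ≥0∞} (hr : r < Metric.ediam (univ : Set X) / 2) :
    ∀ᶠ a in residual X, ∃ᶠ n in atTop, r < edist (y n) (f^[n] (f^[i] a)) := by
  obtain ⟨p, -, q, -, hpq⟩ := exists_lt_edist_of_lt_ediam (ENNReal.mul_lt_of_lt_div hr)
  obtain ⟨P, Q, hP, hQ, hp, hq, hPQ⟩ := isOpen_prod_iff.1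
    (isOpen_lt continuous_const continuous_edist : IsOpen {z : X × X | r * 2 < edist z.1 z.2})
    p q hpq
  refine hwm.eventually_residual_frequently_iterate_mem hf (κ := Bool)
    (Q := fun b => cond b P Q) (V := fun n => {w | r < edist (y n) w})
    (Bool.forall_bool.2 ⟨hQ, hP⟩) (Bool.forall_bool.2 ⟨⟨q, hq⟩, ⟨p, hp⟩⟩)
    (fun n => isOpen_lt continuous_const (by fun_prop)) (fun n => ?_) i
  by_contra! hnear
  obtain ⟨⟨a, haP, ha⟩, ⟨b, hbQ, hb⟩⟩ := not_subset.1 (hnear true), not_subset.1 (hnear false)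
  have hab : edist a b ≤ r * 2 :=
    calc edist a b ≤ edist (y n) a + edist (y n) b := edist_triangle_left _ _ _
      _ ≤ r + r := add_le_add (not_lt.1 ha) (not_lt.1 hb)
      _ = r * 2 := (mul_two r).symm
  exact hab.not_gt (hPQ (mk_mem_prod haP hbQ))

theorem eventually_residual_scrambledPair (hwm : WeaklyMixing f) (hf : Continuous f)
    {y : ℕ → X} (hy : TotallyBounded (range y)) (i : ℕ) :
    ∀ᶠ a in residual X, ScrambledPair (Metric.ediam (univ : Set X) / 2) y
      fun n => f^[n] (f^[i] a) :=
  eventually_scrambledPair (fun _ => hwm.eventually_residual_frequently_edist_lt hf hy i)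
    fun _ => hwm.eventually_residual_frequently_lt_edist hf y i

end WeaklyMixing

end Scrambled

theorem scrambled_with_compact_orbit_points_general {X ι : Type*} [EMetricSpace X] [PolishSpace X]
    [Nontrivial X] [Countable ι] {f : X → X} (hf : Continuous f) (hwm : WeaklyMixing f)
    {x : ι → X} (hx : ∀ m, TotallyBounded (range fun i : ℕ => f^[i] (x m))) :
    ∃ S : ℕ → Set X,
      Pairwise (Disjoint on S) ∧
      (∀ j, IsCantorSet (S j)) ∧
      (∀ j, ∀ a ∈ S j, TotallyTransitivePoint f a) ∧
      Dense (⋃ j, S j) ∧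
      (∀ n : ℕ, 1 ≤ n → (⋃ j, S j).Pairwise fun a b =>
        ScrambledPair (Metric.ediam (univ : Set X)) (fun k => f^[n * k] a) fun k => f^[n * k] b) ∧
      ∀ m, ∀ c ∈ ⋃ i : ℕ, f^[i] '' ⋃ j, S j,
        ScrambledPair (Metric.ediam (univ : Set X) / 2) (fun n => f^[n] (x m))
          fun n => f^[n] c := by
  have := hwm.perfectSpace
  have hpoint : ∀ᶠ a in residual X, TotallyTransitivePoint f a ∧ ∀ m i,
      ScrambledPair (Metric.ediam (univ : Set X) / 2) (fun n => f^[n] (x m))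
        fun n => f^[n] (f^[i] a) := by
    simp only [eventually_and, eventually_countable_forall]
    exact ⟨hwm.eventually_residual_totallyTransitivePoint hf,
      fun m i => hwm.eventually_residual_scrambledPair hf (hx m) i⟩
  have hpair : ∀ᶠ p in residual (X × X), ∀ n, 1 ≤ n →
      ScrambledPair (Metric.ediam (univ : Set X)) (fun k => f^[n * k] p.1)
        fun k => f^[n * k] p.2 := by
    simp only [eventually_countable_forall]
    exact fun n hn => hwm.eventually_residual_prod_scrambledPair hf hn
  obtain ⟨S, hdisjoint, hcantor, hdense, hSpoint, hSpair⟩ :=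
    exists_isCantorSet_dense_iUnion_of_mem_residual hpoint hpair
  refine ⟨S, hdisjoint, hcantor, fun j a ha => (hSpoint (mem_iUnion_of_mem j ha)).1, hdense,
    fun n hn a ha b hb hab => hSpair ha hb hab n hn, fun m c hc => ?_⟩
  obtain ⟨i, a, ha, rfl⟩ := mem_iUnion.1 hc
  exact (hSpoint ha).2 m i

theorem scrambled_with_compact_orbit_points {X : Type*} [MetricSpace X] [Infinite X]
    [TopologicalSpace.SeparableSpace X] [LocallyCompactSpace X]
    (f : X → X) (hf : Continuous f) (hwm : WeaklyMixing f)
    (β : ℝ≥0∞) (hβ : β = EMetric.diam (Set.univ : Set X))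
    (x : ℕ → X) (hx : ∀ m, IsCompact (closure (Set.range fun i : ℕ => f^[i] (x m)))) :
    ∃ S : ℕ → Set X,
      (∀ i j, i ≠ j → Disjoint (S i) (S j)) ∧
      (∀ j, IsCantorSet (S j)) ∧
      (∀ j, ∀ a ∈ S j, TotallyTransitivePoint f a) ∧
      Dense (⋃ j, S j) ∧
      (∀ n : ℕ, 1 ≤ n → ∀ a ∈ ⋃ j, S j, ∀ b ∈ ⋃ j, S j, a ≠ b →
        atTop.liminf (fun k : ℕ => edist (f^[n * k] a) (f^[n * k] b)) = 0 ∧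
        β ≤ atTop.limsup (fun k : ℕ => edist (f^[n * k] a) (f^[n * k] b))) ∧
      (∀ m : ℕ, ∀ c ∈ ⋃ i : ℕ, f^[i] '' (⋃ j, S j),
        atTop.liminf (fun n : ℕ => edist (f^[n] (x m)) (f^[n] c)) = 0 ∧
        β / 2 ≤ atTop.limsup (fun n : ℕ => edist (f^[n] (x m)) (f^[n] c))) := by
  have := polishSpace_of_weaklyLocallyCompactSpace X
  exact hβ ▸ scrambled_with_compact_orbit_points_general hf hwm fun m =>
    (hx m).totallyBounded.subset subset_closure
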